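/- arXiv:2302.13920 — 3 statements merged into one kernel-verified Lean document; each statement's English description precedes it below -/
import Mathlib

section
/- Suppose J ⊆ I ⊆ K are dyadic intervals with dist(J, ∂I) > 2·ℓ(J)^ε·ℓ(I)^{1−ε} for some 0 < ε < 1/2. Then for every positive Borel measure μ on ℝ, P(J, 1_{K∖I}μ) ≤ C_ε·(ℓ(J)/ℓ(I))^{1−2ε}·P(I, 1_{K∖I}μ), where C_ε depends only on ε. -/
open MeasureTheory Set
open scoped ENNReal Classical

noncomputable section

/-- A dyadic interval `[n·2^k, (n+1)·2^k)`. -/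
structure DI where
  k : ℤ
  n : ℤ

namespace DI

/-- The underlying set of a dyadic interval. -/
def set (I : DI) : Set ℝ := Set.Ico ((I.n : ℝ) * (2:ℝ) ^ I.k) (((I.n : ℝ) + 1) * (2:ℝ) ^ I.k)

/-- The side length `ℓ(I)`. -/
def len (I : DI) : ℝ := (2:ℝ) ^ I.k

/-- left endpoint -/
def lo (I : DI) : ℝ := (I.n : ℝ) * (2:ℝ) ^ I.k

/-- right endpoint -/
def hi (I : DI) : ℝ := ((I.n : ℝ) + 1) * (2:ℝ) ^ I.k

/-- center `c_I` -/
def center (I : DI) : ℝ := ((I.n : ℝ) + 1/2) * (2:ℝ) ^ I.k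

/-- left dyadic child -/
def left (I : DI) : DI := ⟨I.k - 1, 2 * I.n⟩

/-- right dyadic child -/
def right (I : DI) : DI := ⟨I.k - 1, 2 * I.n + 1⟩

/-- parent interval -/
def parent (I : DI) : DI := ⟨I.k + 1, Int.fdiv I.n 2⟩

/-- m-th ancestor `π^m I` -/
def anc (I : DI) : ℕ → DI
  | 0 => I
  | (m+1) => (anc I m).parent

/-- distance of `J ⊆ K` to the boundary of `K` -/
def distToBdry (J K : DI) : ℝ := min (J.lo - K.lo) (K.hi - J.hi)

/-- the child of `I` containing `J` (for `J ⊆ I` strictly) -/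
def childContaining (I J : DI) : DI := if J.set ⊆ I.left.set then I.left else I.right

/-- the sibling `θ(I_J)` of the child of `I` containing `J` -/
def sibling (I J : DI) : DI := if J.set ⊆ I.left.set then I.right else I.left

end DI

/-- `J` is an `(r,ε)`-good dyadic interval. -/
def IsGood (r : ℕ) (ε : ℝ) (J : DI) : Prop :=
  ∀ K : DI, J.set ⊆ K.set → (2:ℝ) ^ r * J.len ≤ K.len →
    J.len ^ ε * K.len ^ (1 - ε) / 2 ≤ DI.distToBdry J K

/-- Poisson integral of `μ` relative to an interval with center `c` and length `ℓ`. -/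
def poissonI (c ℓ : ℝ) (μ : Measure ℝ) : ℝ≥0∞ :=
  ∫⁻ y, ENNReal.ofReal (ℓ / (ℓ + |y - c|) ^ 2) ∂μ

/-- Poisson integral `P(I, μ)` for a dyadic interval. -/
def DI.poisson (I : DI) (μ : Measure ℝ) : ℝ≥0∞ := poissonI I.center I.len μ

/-- average `E^μ_K f = (1/|K|_μ) ∫_K f dμ` -/
def avg (μ : Measure ℝ) (K : Set ℝ) (f : ℝ → ℝ) : ℝ := (∫ x in K, f x ∂μ) / (μ K).toReal

/-- martingale (Haar) difference `Δ_I^μ f` -/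
def haar (μ : Measure ℝ) (I : DI) (f : ℝ → ℝ) : ℝ → ℝ := fun x =>
  (I.left.set.indicator (fun _ => avg μ I.left.set f)) x
    + (I.right.set.indicator (fun _ => avg μ I.right.set f)) x
    - (I.set.indicator (fun _ => avg μ I.set f)) x

/-- truncated Hilbert transform `H_t(f σ)(x)` -/
def Htr (σ : Measure ℝ) (f : ℝ → ℝ) (t : ℝ) (x : ℝ) : ℝ :=
  ∫ y in {y : ℝ | t < |y - x|}, f y / (y - x) ∂σ

/-- pairing `⟨H_t(f σ), ψ⟩_{L²(ω)}` -/
def pairH (σ ω : Measure ℝ) (f ψ : ℝ → ℝ) (t : ℝ) : ℝ :=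
  ∫ x, Htr σ f t x * ψ x ∂ω

/-- testing characteristic `𝔗_H(σ, ω)`, uniform over truncations -/
def testH (σ ω : Measure ℝ) : ℝ≥0∞ :=
  ⨆ (a : ℝ) (b : ℝ) (_ : a < b) (t : ℝ) (_ : 0 < t),
    eLpNorm (Htr σ ((Set.Ico a b).indicator 1) t) 2 ω / (σ (Set.Ico a b)) ^ (1/2 : ℝ)

/-- operator norm characteristic `𝔑_H(σ, ω)`, uniform over truncations -/
def normH (σ ω : Measure ℝ) : ℝ≥0∞ :=
  ⨆ (t : ℝ) (_ : 0 < t) (f : ℝ → ℝ) (_ : MeasureTheory.MemLp f 2 σ),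
    eLpNorm (Htr σ f t) 2 ω / eLpNorm f 2 σ

/-- two-tailed Muckenhoupt characteristic with holes `𝒜₂^hole(σ, ω)` -/
def A2hole (σ ω : Measure ℝ) : ℝ≥0∞ :=
  ⨆ (a : ℝ) (b : ℝ) (_ : a < b),
    poissonI ((a+b)/2) (b-a) (ω.restrict (Set.Ico a b)ᶜ) * σ (Set.Ico a b) / ENNReal.ofReal (b-a)
      + ω (Set.Ico a b) / ENNReal.ofReal (b-a) * poissonI ((a+b)/2) (b-a) (σ.restrict (Set.Ico a b)ᶜ)

/-- offset Muckenhoupt characteristic `A₂^offset(σ, ω)` with parameter `r` -/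
def A2offset (r : ℕ) (σ ω : Measure ℝ) : ℝ≥0∞ :=
  ⨆ (Q : DI) (Q' : DI) (_ : Disjoint Q.set Q'.set)
    (_ : ¬ Disjoint (closure Q.set) (closure Q'.set))
    (_ : Q'.len ≤ (2:ℝ) ^ r * Q.len) (_ : Q.len ≤ (2:ℝ) ^ r * Q'.len),
    (ω Q'.set / ENNReal.ofReal Q'.len) * (σ Q.set / ENNReal.ofReal Q.len)

/-- energy `E(J,ω)²` -/
def energySq (ω : Measure ℝ) (J : DI) : ℝ≥0∞ :=
  (∫⁻ x in J.set, ENNReal.ofReal ((x - avg ω J.set (fun z => z)) ^ 2) ∂ω)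
    / (ω J.set * ENNReal.ofReal (J.len ^ 2))

/-- energy characteristic `ℰ₂(σ,ω)²` -/
def energyCharSq (σ ω : Measure ℝ) : ℝ≥0∞ :=
  ⨆ (a : ℝ) (b : ℝ) (_ : a < b) (𝒮 : Set DI)
    (_ : ∀ I ∈ 𝒮, DI.set I ⊆ Set.Ico a b)
    (_ : 𝒮.Pairwise fun I I' => Disjoint I.set I'.set),
    (∑' I : 𝒮, (I : DI).poisson (σ.restrict (Set.Ico a b \ (I : DI).set)) ^ 2
        * energySq ω (I : DI) * ω (I : DI).set) / σ (Set.Ico a b)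

/-- `ℱ`-children: maximal members of `ℱ` strictly contained in `F` -/
def fChildren (ℱ : Set DI) (F : DI) : Set DI :=
  {G | G ∈ ℱ ∧ G.set ⊂ F.set ∧ ∀ H ∈ ℱ, H.set ⊂ F.set → G.set ⊆ H.set → H = G}

/-- m-fold iterated `ℱ`-children -/
def fDesc (ℱ : Set DI) : ℕ → DI → Set DI
  | 0, F => {F}
  | (m+1), F => ⋃ G ∈ fChildren ℱ F, fDesc ℱ m G

/-- the corona `𝒞_ℱ(F)` -/
def corona (ℱ : Set DI) (F : DI) : Set DI :=
  {I | I.set ⊆ F.set ∧ ∀ F' ∈ ℱ, F'.set ⊂ F.set → ¬ I.set ⊆ F'.set}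

/-- `ℱ` is σ-Carleson with norm `Cℱ` -/
def IsCarleson (σ : Measure ℝ) (ℱ : Set DI) (Cℱ : ℝ) : Prop :=
  ∀ S ∈ ℱ, ∑' F : {F : DI // F ∈ ℱ ∧ F.set ⊆ S.set}, σ (F : DI).set
    ≤ ENNReal.ofReal Cℱ * σ S.set

/-- `W` is `(r,ε)`-deeply embedded in `F` -/
def deepIn (r : ℕ) (ε : ℝ) (W F : DI) : Prop :=
  W.set ⊆ F.set ∧ W.len ≤ (2:ℝ) ^ (-(r:ℤ)) * F.len ∧
    W.len ^ ε * F.len ^ (1 - ε) / 2 ≤ DI.distToBdry W F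

/-- the `(r,ε)`-Whitney collection `ℳ_{(r,ε)-deep}(F)` -/
def Mdeep (r : ℕ) (ε : ℝ) (F : DI) : Set DI :=
  {W | deepIn r ε W F ∧ ∀ W' : DI, deepIn r ε W' F → W.set ⊆ W'.set → W' = W}

/-- pointwise Haar projection of the identity function onto a collection `𝒮` -/
def projId (ω : Measure ℝ) (𝒮 : Set DI) : ℝ → ℝ :=
  fun x => ∑' J : 𝒮, haar ω (J : DI) (fun z => z) x

/-- functional energy characteristic `𝔉(σ, ω)` -/
def funcEnergy (r : ℕ) (ε : ℝ) (σ ω : Measure ℝ) : ℝ≥0∞ :=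
  ⨆ (ℱ : Set DI) (h : ℝ → ℝ) (_ : MeasureTheory.MemLp h 2 σ) (_ : ∀ x, 0 ≤ h x),
    (∑' F : ℱ, ∑' W : Mdeep r ε (F : DI),
      ((W : DI).poisson
          (((σ.withDensity fun y => ENNReal.ofReal (h y))).restrict ((F : DI).set)ᶜ)
        / ENNReal.ofReal (W : DI).len) ^ 2
        * ∫⁻ x in (W : DI).set,
            ENNReal.ofReal
              ((projId ω (corona ℱ (F : DI) ∩ {J : DI | J.set ⊆ (W : DI).set}) x) ^ 2) ∂ω)
      ^ (1/2 : ℝ) / eLpNorm h 2 σ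

/-- stopping-time suprema `α_ℱ(F)` of averages of `|f|` -/
def alphaF (σ : Measure ℝ) (ℱ : Set DI) (f : ℝ → ℝ) (F : DI) : ℝ :=
  ⨆ G : {G : DI // G ∈ ℱ ∧ F.set ⊆ G.set}, avg σ (G : DI).set (fun x => |f x|)

/-- projection `𝖯_F f = Σ_{K ⊆ F} Δ_K^σ f` (pointwise tsum) -/
def dyadicProj (σ : Measure ℝ) (F : DI) (f : ℝ → ℝ) : ℝ → ℝ :=
  fun x => ∑' K : {K : DI // K.set ⊆ F.set}, haar σ (K : DI) f x

/-- concentric triple 3K -/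
def tripleSet (K : DI) : Set ℝ :=
  Set.Ico (K.center - 3/2 * K.len) (K.center + 3/2 * K.len)

/-- `K` is good, inside `S`, with triple inside `S` -/
def goodTrip (r : ℕ) (ε : ℝ) (S K : DI) : Prop :=
  IsGood r ε K ∧ K.set ⊆ S.set ∧ tripleSet K ⊆ S.set

/-- `𝒲^trip(S) = {S} ∪ ℳ_good^trip(S)` -/
def Wtrip (r : ℕ) (ε : ℝ) (S : DI) : Set DI :=
  {S} ∪ {K | goodTrip r ε S K ∧ ∀ K' : DI, goodTrip r ε S K' → K.set ⊆ K'.set → K' = K}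

/-- refined Poisson-Energy characteristic `PE_𝒜^{A,trip}(Λ; σ, ω)` -/
def PEtrip (r : ℕ) (ε : ℝ) (σ ω : Measure ℝ) (F A : DI) (𝒜 : Set DI) (Λ : Finset DI) : ℝ≥0∞ :=
  ⨆ (S : DI) (_ : S ∈ fChildren 𝒜 A) (K : DI) (_ : K ∈ Wtrip r ε S),
    (K.poisson (σ.restrict (F.set \ S.set)) / ENNReal.ofReal K.len)
      * (∑ J ∈ Λ, if J.set ⊆ K.set then eLpNorm (haar ω J (fun z => z)) 2 ω ^ 2 else 0)
          ^ (1/2 : ℝ)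
      / (σ K.set) ^ (1/2 : ℝ)

/-- Poisson-Energy characteristic `PE^F(𝒞; σ, ω)` -/
def PEchar (r : ℕ) (ε : ℝ) (σ ω : Measure ℝ) (F : DI) (𝒞 : Set DI) : ℝ≥0∞ :=
  ⨆ (I : DI) (_ : I ∈ 𝒞) (_ : IsGood r ε I),
    I.poisson (σ.restrict (F.set \ I.set)) * (energySq ω I) ^ (1/2 : ℝ)
      * (ω I.set / σ I.set) ^ (1/2 : ℝ)

/-- dual integration operator `I*μ(α) = Σ_{β ⊆ α} μ(β)` -/
def Istar (μ : DI → ℝ) (α : DI) : ℝ := ∑ᶠ β ∈ {β : DI | β.set ⊆ α.set}, μ β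

/-- the minimal intervals in the support of `μ` -/
def minSupp (μ : DI → ℝ) : Set DI :=
  {α | μ α ≠ 0 ∧ ∀ β : DI, μ β ≠ 0 → β.set ⊆ α.set → β = α}

/-- `Σ_{β ∈ S, β ⊊ α} I*μ(β)` -/
def stopSum (μ : DI → ℝ) (S : Set DI) (α : DI) : ℝ :=
  ∑ᶠ β ∈ {β ∈ S | β.set ⊂ α.set}, Istar μ β

/-- stopping criterion relative to a previous antichain `S` -/
def stopProp (μ : DI → ℝ) (Γ : ℝ) (S : Set DI) (α : DI) : Prop :=
  Γ * stopSum μ S α < Istar μ α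

/-- the minimal intervals in `𝒟(o)` satisfying the stopping criterion -/
def nextGen (μ : DI → ℝ) (Γ : ℝ) (o : DI) (S : Set DI) : Set DI :=
  {α | α.set ⊆ o.set ∧ stopProp μ Γ S α ∧
    ∀ β : DI, β.set ⊆ o.set → stopProp μ Γ S β → β.set ⊆ α.set → β = α}

/-- `μ` is `Γ`-irreducible -/
def Irreducible' (μ : DI → ℝ) (Γ : ℝ) (o : DI) : Prop :=
  ¬ ∃ α : DI, α.set ⊆ o.set ∧ stopProp μ Γ (minSupp μ) α

/-- `α_A(S)` for the Stopping Child Lemma -/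
def stopAlpha (σ : Measure ℝ) (r : ℕ) (ε : ℝ) (Λf : Finset DI) (f : ℝ → ℝ) (A S : DI) : ℝ :=
  ⨆ I : {I : DI // IsGood r ε I ∧ I.set ⊆ A.set ∧
      ∃ I0 ∈ Λf, S.set ⊆ I0.set ∧ I0.set ⊂ I.set}, |avg σ (I : DI).set f|

theorem pd_aux (ε a L : ℝ) (ha : 0 < a) (hL : 0 < L) :
    (a / L) ^ (1 - 2*ε) * L * (a ^ ε * L ^ (1 - ε)) ^ 2 = a * L ^ 2 := by
  have e1 : a ^ (1 - 2*ε) * (a ^ ε) ^ 2 = a := by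
    rw [← Real.rpow_mul_natCast ha.le, ← Real.rpow_add ha]
    have : 1 - 2*ε + ε * ((2:ℕ):ℝ) = 1 := by push_cast; ring
    rw [this, Real.rpow_one]
  have e2 : (L ^ (1 - ε)) ^ 2 = L ^ (1 - 2*ε) * L := by
    rw [← Real.rpow_mul_natCast hL.le, ← Real.rpow_add_one hL.ne']
    congr 1; push_cast; ring
  have h3 : 0 < L ^ (1 - 2*ε) := Real.rpow_pos_of_pos hL _
  rw [Real.div_rpow ha.le hL.le, mul_pow, e2]
  field_simp
  linear_combination e1

theorem pd_pt (ε a L p q y : ℝ) (ha : 0 < a) (hL : 0 < L)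
    (h1 : 2 * a ^ ε * L ^ (1 - ε) < p - q)
    (h2 : 2 * a ^ ε * L ^ (1 - ε) < (q + L) - (p + a))
    (hy : ¬ (q ≤ y ∧ y < q + L)) :
    a / (a + |y - (p + a/2)|) ^ 2 ≤
      4 * (a / L) ^ (1 - 2*ε) * (L / (L + |y - (q + L/2)|) ^ 2) := by
  have key := pd_aux ε a L ha hL
  have hd : 0 < a ^ ε * L ^ (1 - ε) := by positivity
  rw [mul_assoc] at h1 h2
  set d := a ^ ε * L ^ (1 - ε)
  set r := (a / L) ^ (1 - 2*ε)
  have hr : r * L = a * L ^ 2 / d ^ 2 := by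
    rw [eq_div_iff (by positivity)]; exact key
  have ht : 2 * d ≤ |y - (p + a/2)| := by
    by_cases hq : q ≤ y
    · have : q + L ≤ y := by
        by_contra h
        exact hy ⟨hq, not_le.mp h⟩
      exact le_trans (by linarith) (le_abs_self _)
    · exact le_trans (by linarith) (neg_le_abs _)
  have hs : |y - (q + L/2)| ≤ |y - (p + a/2)| + L/2 := by
    have h5 : |(p + a/2) - (q + L/2)| ≤ L/2 := abs_le.mpr ⟨by linarith, by linarith⟩
    have := abs_sub_le y (p + a/2) (q + L/2)
    linarith
  have hs0 := abs_nonneg (y - (q + L/2))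
  set t := |y - (p + a/2)|
  set s := |y - (q + L/2)|
  have hdL : d ≤ L := by linarith
  have main : d * (L + s) ≤ 2 * L * (a + t) := by
    have i1 : d * (L + s) ≤ d * (t + 3/2 * L) := mul_le_mul_of_nonneg_left (by linarith) hd.le
    have i2 : d * t ≤ L * t := mul_le_mul_of_nonneg_right hdL (by linarith)
    have i3 : 2 * d * L ≤ t * L := by gcongr
    have i4 : 0 < L * a := by positivity
    have i5 : 0 ≤ L * t := by apply mul_nonneg hL.le; linarith
    nlinarith
  have ht0 : 0 < a + t := by linarith
  have hs1 : 0 < L + s := by linarith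
  have m2 : (d * (L + s)) ^ 2 ≤ (2 * L * (a + t)) ^ 2 := by gcongr
  have : 4 * r * (L / (L + s) ^ 2) = 4 * a * L ^ 2 / (d ^ 2 * (L + s) ^ 2) := by
    rw [show 4 * r * (L / (L + s) ^ 2) = 4 * (r * L) / (L + s) ^ 2 by ring, hr]
    field_simp
  rw [this, div_le_div_iff₀ (by positivity) (by positivity)]
  have := mul_le_mul_of_nonneg_left m2 ha.le
  nlinarith

/-- Poisson Decay Lemma. -/
theorem statement1 (ε : ℝ) (hε0 : 0 < ε) (hε : ε < 1/2) :
    ∃ C : ℝ, 0 < C ∧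
      ∀ (J I K : DI) (μ : Measure ℝ), IsLocallyFiniteMeasure μ →
        J.set ⊆ I.set → I.set ⊆ K.set →
        2 * J.len ^ ε * I.len ^ (1 - ε) < DI.distToBdry J I →
        J.poisson (μ.restrict (K.set \ I.set)) ≤
          ENNReal.ofReal (C * (J.len / I.len) ^ (1 - 2*ε)) *
            I.poisson (μ.restrict (K.set \ I.set)) := by
  refine ⟨4, by norm_num, ?_⟩
  intro J I K μ _ _ _ hdist
  have ha : 0 < J.len := by unfold DI.len; positivity
  have hL : 0 < I.len := by unfold DI.len; positivity
  unfold DI.distToBdry at hdist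
  obtain ⟨h1, h2⟩ := lt_min_iff.mp hdist
  have hJh : J.hi = J.lo + J.len := by unfold DI.hi DI.lo DI.len; ring
  have hIh : I.hi = I.lo + I.len := by unfold DI.hi DI.lo DI.len; ring
  have hJc : J.center = J.lo + J.len / 2 := by unfold DI.center DI.lo DI.len; ring
  have hIc : I.center = I.lo + I.len / 2 := by unfold DI.center DI.lo DI.len; ring
  have hIs : I.set = Set.Ico I.lo I.hi := rfl
  rw [hJh, hIh] at h2
  have hm : MeasurableSet (K.set \ I.set) := measurableSet_Ico.diff measurableSet_Ico
  unfold DI.poisson poissonI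
  rw [← lintegral_const_mul' _ _ ENNReal.ofReal_ne_top]
  refine setLIntegral_mono' hm ?_
  intro y hy
  rw [← ENNReal.ofReal_mul (by positivity)]
  apply ENNReal.ofReal_le_ofReal
  rw [hJc, hIc]
  refine pd_pt ε _ _ _ _ y ha hL h1 h2 ?_
  have := hy.2
  rw [hIs, hIh] at this
  exact this

end
end

section
/- (Carleson property of the CZ-Poisson-Energy stopping children.) Let F be a dyadic interval with |F|_σ > 0, let f ∈ L²(σ), let Γ > 0, and write 𝖯_F f := Σ_{K dyadic, K⊆F} Δ_K^σ f. Suppose {F′_j} is a family of pairwise disjoint dyadic subintervals of F such that each F′_j satisfies either (i) P(F′_j, 1_{F∖F′_j}σ)²·E(F′_j,ω)²·|F′_j|_ω > Γ·|F′_j|_σ, or (ii) (1/|F′_j|_σ)∫_{F′_j}|𝖯_F f| dσ > 4·(1/|F|_σ)∫_F |𝖯_F f| dσ. Then Σ_j |F′_j|_σ ≤ (1/4 + ℰ₂(σ,ω)²/Γ)·|F|_σ. In particular, if Γ > 4·ℰ₂(σ,ω)² then Σ_j |F′_j|_σ < ½|F|_σ. -/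
open MeasureTheory Set
open scoped ENNReal Classical

noncomputable section

/-- descendants of `F` -/
def kid (F : DI) (n m : ℕ) : DI := ⟨F.k - n, F.n * 2 ^ n + m⟩

lemma kid_left (F : DI) (n m : ℕ) : (kid F n m).left = kid F (n+1) (2*m) := by
  simp only [kid, DI.left, DI.mk.injEq]
  push_cast
  constructor <;> ring

lemma kid_right (F : DI) (n m : ℕ) : (kid F n m).right = kid F (n+1) (2*m+1) := by
  simp only [kid, DI.right, DI.mk.injEq]
  push_cast
  constructor <;> ring

lemma kid_zero (F : DI) : kid F 0 0 = F := by
  simp [kid]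

lemma DI.meas (K : DI) : MeasurableSet K.set := measurableSet_Ico

lemma DI.lt (K : DI) : (K.n : ℝ) * (2:ℝ) ^ K.k < ((K.n : ℝ) + 1) * (2:ℝ) ^ K.k := by
  have : (0:ℝ) < (2:ℝ) ^ K.k := by positivity
  nlinarith

lemma DI.fin (σ : Measure ℝ) [IsLocallyFiniteMeasure σ] (K : DI) : σ K.set ≠ ⊤ := by
  have : σ K.set ≤ σ (Set.Icc ((K.n : ℝ) * (2:ℝ) ^ K.k) (((K.n : ℝ) + 1) * (2:ℝ) ^ K.k)) :=
    measure_mono Ico_subset_Icc_self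
  exact ne_top_of_le_ne_top isCompact_Icc.measure_lt_top.ne this

lemma DI.split (K : DI) : ∃ c : ℝ, K.left.set = Ico ((K.n : ℝ) * (2:ℝ) ^ K.k) c ∧
    K.right.set = Ico c (((K.n : ℝ) + 1) * (2:ℝ) ^ K.k) ∧
    (K.n : ℝ) * (2:ℝ) ^ K.k ≤ c ∧ c ≤ ((K.n : ℝ) + 1) * (2:ℝ) ^ K.k := by
  have hp : (0:ℝ) < (2:ℝ) ^ K.k := by positivity
  have h2 : (2:ℝ) ^ (K.k - 1) = (2:ℝ) ^ K.k / 2 := by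
    rw [zpow_sub_one₀ (by norm_num)]; ring
  refine ⟨((K.n : ℝ) + 1/2) * (2:ℝ) ^ K.k, ?_, ?_, by nlinarith, by nlinarith⟩
  · simp only [DI.set, DI.left]
    rw [h2]; push_cast
    congr 1 <;> ring
  · simp only [DI.set, DI.right]
    rw [h2]; push_cast
    congr 1 <;> ring

lemma DI.union (K : DI) : K.left.set ∪ K.right.set = K.set := by
  obtain ⟨c, h1, h2, h3, h4⟩ := K.split
  rw [h1, h2, DI.set, Ico_union_Ico_eq_Ico h3 h4]

lemma DI.disj (K : DI) : Disjoint K.left.set K.right.set := by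
  obtain ⟨c, h1, h2, h3, h4⟩ := K.split
  rw [h1, h2]
  exact Ico_disjoint_Ico_same

lemma kid_subset (F : DI) (n m : ℕ) (hm : m < 2 ^ n) : (kid F n m).set ⊆ F.set := by
  have hp : (0:ℝ) < (2:ℝ) ^ (F.k - n) := by positivity
  have h2 : (2:ℝ) ^ F.k = 2 ^ n * (2:ℝ) ^ (F.k - n) := by
    rw [← zpow_natCast, ← zpow_add₀ (by norm_num)]; congr 1; ring
  have hm' : (m : ℝ) + 1 ≤ 2 ^ n := by exact_mod_cast hm
  have hm0 : (0 : ℝ) ≤ m := Nat.cast_nonneg m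
  simp only [DI.set, kid]
  rw [h2]
  push_cast
  refine Ico_subset_Ico ?_ ?_
  · rw [← mul_assoc]
    exact mul_le_mul_of_nonneg_right (by linarith) hp.le
  · rw [← mul_assoc]
    exact mul_le_mul_of_nonneg_right (by linarith) hp.le

lemma exists_kid (F K : DI) (h : K.set ⊆ F.set) : ∃ n m : ℕ, m < 2 ^ n ∧ kid F n m = K := by
  rw [DI.set, DI.set, Ico_subset_Ico_iff K.lt] at h
  obtain ⟨ha, hb⟩ := h
  have hk : K.k ≤ F.k := by
    have : (2:ℝ) ^ K.k ≤ (2:ℝ) ^ F.k := by linarith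
    exact (zpow_le_zpow_iff_right₀ (by norm_num)).1 this
  obtain ⟨n, hn⟩ := Int.eq_ofNat_of_zero_le (sub_nonneg.2 hk)
  have hp : (0:ℝ) < (2:ℝ) ^ K.k := by positivity
  have h2 : (2:ℝ) ^ F.k = 2 ^ n * (2:ℝ) ^ K.k := by
    rw [← zpow_natCast, ← zpow_add₀ (by norm_num)]; congr 1; omega
  rw [h2, ← mul_assoc] at ha hb
  have ha' := le_of_mul_le_mul_right ha hp
  have hb' := le_of_mul_le_mul_right hb hp
  have ha2 : F.n * 2 ^ n ≤ K.n := by exact_mod_cast ha'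
  have hb2 : K.n + 1 ≤ (F.n + 1) * 2 ^ n := by exact_mod_cast hb'
  obtain ⟨m, hm⟩ := Int.eq_ofNat_of_zero_le (sub_nonneg.2 ha2)
  refine ⟨n, m, ?_, ?_⟩
  · have : (m : ℤ) < 2 ^ n := by linarith
    exact_mod_cast this
  · cases K
    simp only [kid, DI.mk.injEq]
    simp only at hn hm
    constructor <;> omega

/-- enumeration of the descendants -/
def kidEquiv (F : DI) : (Σ n : ℕ, Fin (2 ^ n)) ≃ {K : DI // K.set ⊆ F.set} :=
  Equiv.ofBijective (fun p => ⟨kid F p.1 p.2, kid_subset F p.1 p.2 p.2.2⟩) (by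
    constructor
    · rintro ⟨n, m⟩ ⟨n', m'⟩ h
      simp only [kid, Subtype.mk.injEq, DI.mk.injEq] at h
      obtain ⟨h1, h2⟩ := h
      have : n = n' := by omega
      subst this
      have : m = m' := by ext; omega
      subst this
      rfl
    · rintro ⟨K, hK⟩
      obtain ⟨n, m, hm, h⟩ := exists_kid F K hK
      exact ⟨⟨n, ⟨m, hm⟩⟩, Subtype.ext h⟩)

lemma sum_even_odd {M : Type*} [AddCommMonoid M] (g : ℕ → M) (m : ℕ) :
    ∑ i ∈ Finset.range (2 * m), g i = ∑ i ∈ Finset.range m, (g (2*i) + g (2*i+1)) := by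
  induction m with
  | zero => simp
  | succ k ih =>
    rw [show 2 * (k+1) = 2*k+1+1 by ring, Finset.sum_range_succ, Finset.sum_range_succ,
      Finset.sum_range_succ, ih, add_assoc]

/-- level averages -/
def lev (σ : Measure ℝ) (F : DI) (f : ℝ → ℝ) (n : ℕ) (x : ℝ) : ℝ :=
  ∑ m ∈ Finset.range (2 ^ n), (kid F n m).set.indicator (fun _ => avg σ (kid F n m).set f) x

lemma sum_haar_level (σ : Measure ℝ) (F : DI) (f : ℝ → ℝ) (n : ℕ) (x : ℝ) :
    ∑ m ∈ Finset.range (2 ^ n), haar σ (kid F n m) f x = lev σ F f (n+1) x - lev σ F f n x := by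
  rw [lev, lev, pow_succ', sum_even_odd, ← Finset.sum_sub_distrib]
  refine Finset.sum_congr rfl fun m _ => ?_
  rw [haar, kid_left, kid_right]

lemma lev_measurable (σ : Measure ℝ) (F : DI) (f : ℝ → ℝ) (n : ℕ) : Measurable (lev σ F f n) := by
  unfold lev
  exact Finset.measurable_fun_sum _ fun m _ => measurable_const.indicator (DI.meas _)

lemma haar_measurable (σ : Measure ℝ) (K : DI) (f : ℝ → ℝ) : Measurable (haar σ K f) := by
  unfold haar
  exact ((measurable_const.indicator (DI.meas _)).add
    (measurable_const.indicator (DI.meas _))).sub (measurable_const.indicator (DI.meas _))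

lemma tendsto_lev (σ : Measure ℝ) (F : DI) (f : ℝ → ℝ) (x : ℝ)
    (h : Summable fun K : {K : DI // K.set ⊆ F.set} => haar σ (K : DI) f x) :
    Filter.Tendsto (fun n => lev σ F f n x - lev σ F f 0 x) Filter.atTop
      (nhds (dyadicProj σ F f x)) := by
  have h0 := h.hasSum
  rw [← (kidEquiv F).hasSum_iff] at h0
  have h1 := h0.sigma (g := fun n => lev σ F f (n+1) x - lev σ F f n x) (fun n => by
    rw [← sum_haar_level, Finset.sum_range]
    exact hasSum_fintype _)
  have h2 := h1.tendsto_sum_nat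
  simp only [Finset.sum_range_sub (fun n => lev σ F f n x)] at h2
  exact h2

lemma countable_sub (F : DI) : Countable {K : DI // K.set ⊆ F.set} :=
  (kidEquiv F).symm.injective.countable

lemma measurable_proj (σ : Measure ℝ) (F : DI) (f : ℝ → ℝ) : Measurable (dyadicProj σ F f) := by
  haveI := countable_sub F
  let A : Set ℝ := {x | Summable fun K : {K : DI // K.set ⊆ F.set} => haar σ (K : DI) f x}
  have hA : MeasurableSet A := by
    have : A = {x | ∑' K : {K : DI // K.set ⊆ F.set}, ‖haar σ (K : DI) f x‖ₑ ≠ ⊤} := by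
      ext x
      simp only [A, mem_setOf_eq]
      rw [← summable_norm_iff]
      simp only [enorm_eq_nnnorm, ENNReal.tsum_coe_ne_top_iff_summable]
      exact NNReal.summable_coe (f := fun K : {K : DI // K.set ⊆ F.set} => ‖haar σ (K : DI) f x‖₊)
    rw [this]
    have hm : Measurable fun x => ∑' K : {K : DI // K.set ⊆ F.set}, ‖haar σ (K : DI) f x‖ₑ :=
      Measurable.ennreal_tsum fun K => (haar_measurable σ K f).enorm
    exact hm (measurableSet_singleton ⊤).compl
  refine measurable_of_tendsto_metrizable
    (f := fun n => A.indicator fun x => lev σ F f n x - lev σ F f 0 x)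
    (fun n => ((lev_measurable σ F f n).sub (lev_measurable σ F f 0)).indicator hA) ?_
  rw [tendsto_pi_nhds]
  intro x
  by_cases hx : x ∈ A
  · simp only [indicator_of_mem hx]
    exact tendsto_lev σ F f x hx
  · simp only [indicator_of_notMem hx]
    rw [dyadicProj, tsum_eq_zero_of_not_summable hx]
    exact tendsto_const_nhds

lemma avg_bound (σ : Measure ℝ) [IsLocallyFiniteMeasure σ] (K : DI) (f : ℝ → ℝ) :
    ‖avg σ K.set f‖ₑ * σ K.set ≤ ∫⁻ x in K.set, ‖f x‖ₑ ∂σ := by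
  by_cases h0 : σ K.set = 0
  · simp [h0]
  have hfin := DI.fin σ K
  refine le_trans (le_of_eq ?_) (enorm_integral_le_lintegral_enorm (μ := σ.restrict K.set) f)
  have hpos : 0 < (σ K.set).toReal := ENNReal.toReal_pos h0 hfin
  have : σ K.set = ‖(σ K.set).toReal‖ₑ := by
    rw [Real.enorm_eq_ofReal hpos.le, ENNReal.ofReal_toReal hfin]
  conv_lhs => rw [this]
  rw [← enorm_mul, avg, div_mul_cancel₀ _ hpos.ne']

lemma sum_lint (σ : Measure ℝ) (F : DI) (f : ℝ → ℝ) (n : ℕ) :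
    ∑ m ∈ Finset.range (2 ^ n), ∫⁻ x in (kid F n m).set, ‖f x‖ₑ ∂σ
      = ∫⁻ x in F.set, ‖f x‖ₑ ∂σ := by
  induction n with
  | zero => simp [kid_zero]
  | succ n ih =>
    rw [pow_succ', sum_even_odd, ← ih]
    refine Finset.sum_congr rfl fun m _ => ?_
    rw [← kid_left, ← kid_right, ← lintegral_union (DI.meas _) (DI.disj _), DI.union]

lemma lev_bound (σ : Measure ℝ) [IsLocallyFiniteMeasure σ] (F : DI) (f : ℝ → ℝ) (n : ℕ) :
    ∫⁻ x, ‖lev σ F f n x‖ₑ ∂σ ≤ ∫⁻ x in F.set, ‖f x‖ₑ ∂σ := by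
  calc ∫⁻ x, ‖lev σ F f n x‖ₑ ∂σ
      ≤ ∫⁻ x, ∑ m ∈ Finset.range (2 ^ n),
        (kid F n m).set.indicator (fun _ => ‖avg σ (kid F n m).set f‖ₑ) x ∂σ := by
        refine lintegral_mono fun x => ?_
        refine (enorm_sum_le _ _).trans (Finset.sum_le_sum fun m _ => ?_)
        rw [enorm_indicator_eq_indicator_enorm]
    _ = ∑ m ∈ Finset.range (2 ^ n), ‖avg σ (kid F n m).set f‖ₑ * σ (kid F n m).set := by
        rw [lintegral_finsetSum _ fun m _ => measurable_const.indicator (DI.meas _)]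
        refine Finset.sum_congr rfl fun m _ => ?_
        rw [lintegral_indicator_const (DI.meas _)]
    _ ≤ _ := by
        rw [← sum_lint σ F f n]
        exact Finset.sum_le_sum fun m _ => avg_bound σ _ f

lemma proj_lint (σ : Measure ℝ) [IsLocallyFiniteMeasure σ] (F : DI) (f : ℝ → ℝ)
    (hf : MemLp f 2 σ) : ∫⁻ x, ‖dyadicProj σ F f x‖ₑ ∂σ < ⊤ := by
  have hI : ∫⁻ x in F.set, ‖f x‖ₑ ∂σ < ⊤ := by
    haveI : IsFiniteMeasure (σ.restrict F.set) := ⟨by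
      rw [Measure.restrict_apply_univ]; exact (DI.fin σ F).lt_top⟩
    exact ((hf.restrict F.set).integrable (by norm_num)).2
  have key : ∀ n, ∫⁻ x, ‖lev σ F f n x - lev σ F f 0 x‖ₑ ∂σ
      ≤ 2 * ∫⁻ x in F.set, ‖f x‖ₑ ∂σ := fun n => by
    calc _ ≤ ∫⁻ x, (‖lev σ F f n x‖ₑ + ‖lev σ F f 0 x‖ₑ) ∂σ :=
          lintegral_mono fun x => enorm_sub_le
      _ = _ := lintegral_add_left (lev_measurable σ F f n).enorm _
      _ ≤ _ := by
        rw [two_mul]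
        exact add_le_add (lev_bound σ F f n) (lev_bound σ F f 0)
  calc _ ≤ ∫⁻ x, Filter.liminf (fun n => ‖lev σ F f n x - lev σ F f 0 x‖ₑ) Filter.atTop ∂σ := by
        refine lintegral_mono fun x => ?_
        by_cases hx : Summable fun K : {K : DI // K.set ⊆ F.set} => haar σ (K : DI) f x
        · exact ((tendsto_lev σ F f x hx).enorm).liminf_eq.ge
        · rw [dyadicProj, tsum_eq_zero_of_not_summable hx]
          simp
    _ ≤ Filter.liminf (fun n => ∫⁻ x, ‖lev σ F f n x - lev σ F f 0 x‖ₑ ∂σ) Filter.atTop :=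
        lintegral_liminf_le fun n =>
          ((lev_measurable σ F f n).sub (lev_measurable σ F f 0)).enorm
    _ ≤ 2 * ∫⁻ x in F.set, ‖f x‖ₑ ∂σ := by
        refine (Filter.liminf_le_liminf (Filter.Eventually.of_forall key)).trans ?_
        simp
    _ < ⊤ := ENNReal.mul_lt_top (by simp) hI

lemma proj_integrable (σ : Measure ℝ) [IsLocallyFiniteMeasure σ] (F : DI) (f : ℝ → ℝ)
    (hf : MemLp f 2 σ) : Integrable (fun x => |dyadicProj σ F f x|) σ :=
  (show Integrable (dyadicProj σ F f) σ from
    ⟨(measurable_proj σ F f).aestronglyMeasurable, proj_lint σ F f hf⟩).abs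

lemma part_cz (σ : Measure ℝ) [IsLocallyFiniteMeasure σ] (F : DI) (hF : 0 < σ F.set)
    (g : ℝ → ℝ) (hg : Integrable g σ) (hg0 : ∀ x, 0 ≤ g x) (𝒮 : Set DI)
    (h1 : ∀ G ∈ 𝒮, DI.set G ⊆ F.set)
    (h2 : 𝒮.Pairwise fun G G' => Disjoint G.set G'.set)
    (h3 : ∀ G ∈ 𝒮, 4 * ((∫ x in F.set, g x ∂σ) / (σ F.set).toReal) <
            (∫ x in DI.set G, g x ∂σ) / (σ (DI.set G)).toReal) :
    ∑' G : 𝒮, σ (G : DI).set ≤ 1/4 * σ F.set := by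
  have hFf := DI.fin σ F
  have hFp : 0 < (σ F.set).toReal := ENNReal.toReal_pos hF.ne' hFf
  set I := ∫ x in F.set, g x ∂σ with hI
  have hI0 : 0 ≤ I := integral_nonneg hg0
  let ν := σ.withDensity fun x => ENNReal.ofReal (g x)
  have hν : ∀ K : DI, ν K.set = ENNReal.ofReal (∫ x in K.set, g x ∂σ) := fun K => by
    rw [withDensity_apply _ K.meas, ofReal_integral_eq_lintegral_ofReal hg.integrableOn
      (Filter.Eventually.of_forall hg0)]
  rcases hI0.eq_or_lt with h | hIp
  · have : 𝒮 = ∅ := by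
      rw [eq_empty_iff_forall_notMem]
      intro G hG
      have h3' := h3 G hG
      have : ∫ x in G.set, g x ∂σ ≤ I :=
        setIntegral_mono_set hg.integrableOn (Filter.Eventually.of_forall hg0)
          (h1 G hG).eventuallyLE
      have h0 : ∫ x in G.set, g x ∂σ = 0 :=
        le_antisymm (this.trans h.symm.le) (integral_nonneg hg0)
      rw [h0, ← h] at h3'
      simp at h3'
    subst this
    simp
  have hpt : ∀ G : 𝒮, ENNReal.ofReal (4 * (I / (σ F.set).toReal)) * σ (G : DI).set
      ≤ ν (G : DI).set := fun G => by
    have h3' := h3 G G.2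
    have hGf := DI.fin σ (G : DI)
    rcases (ENNReal.toReal_nonneg (a := σ (G : DI).set)).eq_or_lt with h | h
    · rw [← h, div_zero] at h3'
      have : 0 ≤ 4 * (I / (σ F.set).toReal) := by positivity
      linarith
    rw [lt_div_iff₀ h] at h3'
    rw [hν]
    conv_lhs => rw [← ENNReal.ofReal_toReal hGf]
    rw [← ENNReal.ofReal_mul (by positivity)]
    exact ENNReal.ofReal_le_ofReal h3'.le
  have hsum : ENNReal.ofReal (4 * (I / (σ F.set).toReal)) * ∑' G : 𝒮, σ (G : DI).set
      ≤ ENNReal.ofReal I := by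
    rw [← ENNReal.tsum_mul_left]
    refine (ENNReal.tsum_le_tsum hpt).trans ?_
    refine (tsum_meas_le_meas_iUnion_of_disjoint ν (fun G : 𝒮 => (G : DI).meas) ?_).trans ?_
    · intro G G' hne
      exact h2 G.2 G'.2 (fun h => hne (Subtype.ext h))
    · rw [hI, ← hν]
      exact measure_mono (iUnion_subset fun G => h1 G G.2)
  have hc : 0 < 4 * (I / (σ F.set).toReal) := by positivity
  have heq : ENNReal.ofReal I =
      ENNReal.ofReal (4 * (I / (σ F.set).toReal)) * (1/4 * σ F.set) := by
    conv_rhs => rw [← ENNReal.ofReal_toReal hFf]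
    rw [show (1/4 : ℝ≥0∞) = ENNReal.ofReal (1/4) by
      rw [ENNReal.ofReal_div_of_pos (by norm_num)]; simp]
    rw [ENNReal.toReal_ofReal hFp.le, ← ENNReal.ofReal_mul (by norm_num), ← ENNReal.ofReal_mul hc.le]
    congr 1
    field_simp
  rw [heq] at hsum
  exact (ENNReal.mul_le_mul_iff_right (by simpa using hc) ENNReal.ofReal_ne_top).1 hsum

lemma part_energy (σ ω : Measure ℝ) [IsLocallyFiniteMeasure σ]
    (F : DI) (hF : 0 < σ F.set) (Γ : ℝ) (hΓ : 0 < Γ) (𝒮 : Set DI)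
    (h1 : ∀ G ∈ 𝒮, DI.set G ⊆ F.set)
    (h2 : 𝒮.Pairwise fun G G' => Disjoint G.set G'.set)
    (h3 : ∀ G ∈ 𝒮, ENNReal.ofReal Γ * σ (DI.set G) <
          (DI.poisson G (σ.restrict (F.set \ DI.set G))) ^ 2 * energySq ω G * ω (DI.set G)) :
    ∑' G : 𝒮, σ (G : DI).set ≤ energyCharSq σ ω / ENNReal.ofReal Γ * σ F.set := by
  have hFf := DI.fin σ F
  have hle : (∑' I : 𝒮, (I : DI).poisson (σ.restrict (F.set \ (I : DI).set)) ^ 2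
        * energySq ω (I : DI) * ω (I : DI).set) / σ F.set ≤ energyCharSq σ ω := by
    unfold energyCharSq
    exact le_iSup_of_le _ (le_iSup_of_le _ (le_iSup_of_le F.lt (le_iSup_of_le 𝒮
      (le_iSup_of_le h1 (le_iSup_of_le h2 le_rfl)))))
  rw [ENNReal.div_le_iff hF.ne' hFf] at hle
  have hΓ0 : ENNReal.ofReal Γ ≠ 0 := by simpa using hΓ
  have hs : ENNReal.ofReal Γ * ∑' G : 𝒮, σ (G : DI).set ≤ energyCharSq σ ω * σ F.set := by
    rw [← ENNReal.tsum_mul_left]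
    exact (ENNReal.tsum_le_tsum fun G : 𝒮 => (h3 G G.2).le).trans hle
  rw [mul_comm] at hs
  have := (ENNReal.le_div_iff_mul_le (Or.inl hΓ0) (Or.inl ENNReal.ofReal_ne_top)).2 hs
  refine this.trans (le_of_eq ?_)
  rw [div_eq_mul_inv, div_eq_mul_inv]
  ring

/-- Carleson property of the CZ-Poisson-Energy stopping children. -/
theorem statement5 (σ ω : Measure ℝ) [IsLocallyFiniteMeasure σ] [IsLocallyFiniteMeasure ω]
    (F : DI) (hF : 0 < σ F.set) (f : ℝ → ℝ) (hf : MeasureTheory.MemLp f 2 σ)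
    (Γ : ℝ) (hΓ : 0 < Γ) (𝒮 : Set DI)
    (h1 : ∀ G ∈ 𝒮, DI.set G ⊆ F.set)
    (h2 : 𝒮.Pairwise fun G G' => Disjoint G.set G'.set)
    (h3 : ∀ G ∈ 𝒮,
      ENNReal.ofReal Γ * σ (DI.set G) <
          (DI.poisson G (σ.restrict (F.set \ DI.set G))) ^ 2 * energySq ω G * ω (DI.set G)
        ∨ 4 * ((∫ x in F.set, |dyadicProj σ F f x| ∂σ) / (σ F.set).toReal) <
            (∫ x in DI.set G, |dyadicProj σ F f x| ∂σ) / (σ (DI.set G)).toReal) :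
    (∑' G : 𝒮, σ (G : DI).set ≤
        (1/4 + energyCharSq σ ω / ENNReal.ofReal Γ) * σ F.set) ∧
      (energyCharSq σ ω * 4 < ENNReal.ofReal Γ →
        ∑' G : 𝒮, σ (G : DI).set < σ F.set / 2) := by
  have hFf := DI.fin σ F
  have first : ∑' G : 𝒮, σ (G : DI).set ≤
      (1/4 + energyCharSq σ ω / ENNReal.ofReal Γ) * σ F.set := by
    let A : Set DI := {G | G ∈ 𝒮 ∧ 4 * ((∫ x in F.set, |dyadicProj σ F f x| ∂σ) / (σ F.set).toReal)
      < (∫ x in DI.set G, |dyadicProj σ F f x| ∂σ) / (σ (DI.set G)).toReal}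
    let B : Set DI := {G | G ∈ 𝒮 ∧ ENNReal.ofReal Γ * σ (DI.set G) <
          (DI.poisson G (σ.restrict (F.set \ DI.set G))) ^ 2 * energySq ω G * ω (DI.set G)}
    have hAB : 𝒮 = A ∪ B := by
      ext G
      constructor
      · intro hG
        rcases h3 G hG with h | h
        · exact Or.inr ⟨hG, h⟩
        · exact Or.inl ⟨hG, h⟩
      · rintro (h | h)
        · exact h.1
        · exact h.1
    have hA : A ⊆ 𝒮 := fun G h => h.1
    have hB : B ⊆ 𝒮 := fun G h => h.1
    have e1 := part_cz σ F hF _ (proj_integrable σ F f hf) (fun x => abs_nonneg _) A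
      (fun G h => h1 G h.1) (h2.mono hA) (fun G h => h.2)
    have e2 := part_energy σ ω F hF Γ hΓ B (fun G h => h1 G h.1) (h2.mono hB) (fun G h => h.2)
    have e3 := ENNReal.tsum_union_le (fun G : DI => σ G.set) A B
    rw [← hAB] at e3
    rw [add_mul]
    exact e3.trans (add_le_add e1 e2)
  refine ⟨first, fun hE => first.trans_lt ?_⟩
  have hΓ0 : ENNReal.ofReal Γ ≠ 0 := by simpa using hΓ
  have hlt : energyCharSq σ ω / ENNReal.ofReal Γ < 1/4 := by
    rw [ENNReal.div_lt_iff (Or.inl hΓ0) (Or.inl ENNReal.ofReal_ne_top)]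
    rw [← ENNReal.lt_div_iff_mul_lt (by simp) (by simp)] at hE
    rwa [one_div, mul_comm, ← div_eq_mul_inv]
  have hhalf : (1/4 + 1/4 : ℝ≥0∞) = 1/2 := by
    rw [show (1/4 : ℝ≥0∞) = ENNReal.ofReal (1/4) by
      rw [ENNReal.ofReal_div_of_pos (by norm_num)]; simp]
    rw [← ENNReal.ofReal_add (by norm_num) (by norm_num),
      show (1/4 + 1/4 : ℝ) = 1/2 by norm_num, ENNReal.ofReal_div_of_pos (by norm_num)]
    simp
  have : 1/4 + energyCharSq σ ω / ENNReal.ofReal Γ < (1/2 : ℝ≥0∞) := by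
    rw [← hhalf]
    exact ENNReal.add_lt_add_left (by simp) hlt
  calc _ < 1/2 * σ F.set := ENNReal.mul_lt_mul_left hF.ne' hFf this
    _ = σ F.set / 2 := by rw [one_div, mul_comm, div_eq_mul_inv]

end
end

section
/- (Quasi-orthogonality.) Let σ be a positive locally finite Borel measure on ℝ, let T be a dyadic interval, and let ℱ be a collection of dyadic subintervals of T with T ∈ ℱ satisfying the Carleson condition Σ_{F′∈𝔠_ℱ(F)}|F′|_σ ≤ ½·|F|_σ for all F ∈ ℱ. For f ∈ L²(σ) define α_ℱ(F) := sup_{G∈ℱ: G⊇F} E^σ_G|f|, where E^σ_G|f| := (1/|G|_σ)∫_G |f| dσ. Then Σ_{F∈ℱ} |F|_σ·α_ℱ(F)² ≤ C·∫_ℝ |f|² dσ for a universal constant C. -/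
open MeasureTheory Set
open scoped ENNReal Classical

noncomputable section

namespace DI

instance instCountableDI : Countable DI := by
  have : Function.Injective (fun I : DI => (I.k, I.n)) := by
    rintro ⟨a, b⟩ ⟨c, d⟩ h
    simp only [Prod.mk.injEq] at h
    obtain ⟨rfl, rfl⟩ := h
    rfl
  exact this.countable

lemma set_lt (I : DI) : (I.n : ℝ) * (2:ℝ) ^ I.k < ((I.n : ℝ) + 1) * (2:ℝ) ^ I.k := by
  have : (0:ℝ) < (2:ℝ) ^ I.k := by positivity
  nlinarith

lemma nonempty_set (I : DI) : I.set.Nonempty := nonempty_Ico.2 I.set_lt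

lemma meas_set (I : DI) : MeasurableSet I.set := measurableSet_Ico

lemma k_le_of_subset {G H : DI} (h : G.set ⊆ H.set) : G.k ≤ H.k := by
  unfold set at h
  rw [Ico_subset_Ico_iff G.set_lt] at h
  have : (2:ℝ) ^ G.k ≤ (2:ℝ) ^ H.k := by linarith [h.1, h.2]
  exact (zpow_le_zpow_iff_right₀ (by norm_num)).1 this

lemma subset_of_mem {G H : DI} (hk : G.k ≤ H.k) {x : ℝ} (hG : x ∈ G.set) (hH : x ∈ H.set) :
    G.set ⊆ H.set := by
  obtain ⟨d, hd⟩ := Int.le.dest hk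
  have e : (2:ℝ) ^ H.k = (2:ℝ) ^ d * (2:ℝ) ^ G.k := by
    rw [← hd, zpow_add₀ (by norm_num), zpow_natCast, mul_comm]
  have hp : (0:ℝ) < (2:ℝ) ^ G.k := by positivity
  simp only [set, e, ← mul_assoc] at hG hH ⊢
  clear e
  generalize (2:ℝ) ^ G.k = c at *
  have h1 : H.n * 2 ^ d < G.n + 1 := by
    have := hH.1.trans_lt hG.2
    have := lt_of_mul_lt_mul_right this hp.le
    exact_mod_cast this
  have h2 : G.n < (H.n + 1) * 2 ^ d := by
    have := hG.1.trans_lt hH.2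
    have := lt_of_mul_lt_mul_right this hp.le
    exact_mod_cast this
  have h1' : ((H.n * 2 ^ d : ℤ) : ℝ) ≤ (G.n : ℤ) := by exact_mod_cast Int.lt_add_one_iff.1 h1
  have h2' : ((G.n + 1 : ℤ) : ℝ) ≤ ((H.n + 1) * 2 ^ d : ℤ) := by exact_mod_cast h2
  push_cast at h1' h2'
  apply Ico_subset_Ico
  · exact mul_le_mul_of_nonneg_right h1' hp.le
  · exact mul_le_mul_of_nonneg_right h2' hp.le

lemma eq_of_subset_of_k {G H : DI} (h : G.set ⊆ H.set) (hk : H.k ≤ G.k) : G = H := by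
  have hk' : G.k = H.k := le_antisymm (k_le_of_subset h) hk
  unfold set at h
  rw [Ico_subset_Ico_iff G.set_lt, hk'] at h
  have hp : (0:ℝ) < (2:ℝ) ^ H.k := by positivity
  have h1 := le_of_mul_le_mul_right h.1 hp
  have h2 := le_of_mul_le_mul_right h.2 hp
  have : (G.n : ℝ) = H.n := by linarith
  have : G.n = H.n := by exact_mod_cast this
  cases G; cases H; simp_all

lemma set_inj {G H : DI} (h : G.set = H.set) : G = H :=
  eq_of_subset_of_k h.subset (k_le_of_subset h.symm.subset)

/-- maximal members of a family -/
def maxl (𝒢 : Set DI) : Set DI := {G | G ∈ 𝒢 ∧ ∀ H ∈ 𝒢, G.set ⊆ H.set → H = G}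

lemma exists_maxl {𝒢 : Set DI} {T : DI} (hT : ∀ G ∈ 𝒢, G.set ⊆ T.set) {F : DI} (hF : F ∈ 𝒢) :
    ∃ G ∈ maxl 𝒢, F.set ⊆ G.set := by
  obtain ⟨m, ⟨G, hG, hFG, rfl⟩, hm⟩ := Int.exists_greatest_of_bdd
    (P := fun m => ∃ G ∈ 𝒢, F.set ⊆ G.set ∧ G.k = m)
    ⟨T.k, by rintro z ⟨G, hG, -, rfl⟩; exact k_le_of_subset (hT G hG)⟩
    ⟨F.k, F, hF, subset_rfl, rfl⟩
  refine ⟨G, ⟨hG, fun H hH hGH => ?_⟩, hFG⟩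
  exact (eq_of_subset_of_k hGH (hm _ ⟨H, hH, hFG.trans hGH, rfl⟩)).symm

lemma maxl_disjoint {𝒢 : Set DI} {G H : DI} (hG : G ∈ maxl 𝒢) (hH : H ∈ maxl 𝒢) (hne : G ≠ H) :
    Disjoint G.set H.set := by
  rw [Set.disjoint_left]
  intro x hx hx'
  rcases le_total G.k H.k with h | h
  · exact hne (hG.2 H hH.1 (subset_of_mem h hx hx')).symm
  · exact hne (hH.2 G hG.1 (subset_of_mem h hx' hx))

end DI

open DI

lemma weak_type (σ : Measure ℝ) [IsLocallyFiniteMeasure σ] {T : DI} {𝒢 : Set DI}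
    (hT : ∀ G ∈ 𝒢, G.set ⊆ T.set) {g : ℝ → ℝ} (hg : Measurable g) {l : ℝ} (hl : 0 < l)
    (hav : ∀ G ∈ 𝒢, l < avg σ G.set (fun x => |g x|)) :
    ENNReal.ofReal l * σ (⋃ G ∈ 𝒢, G.set) ≤
      2 * ∫⁻ x, {x | l / 2 < |g x|}.indicator (fun x => ENNReal.ofReal |g x|) x ∂σ := by
  set φ : ℝ → ℝ≥0∞ := {x | l / 2 < |g x|}.indicator (fun x => ENNReal.ofReal |g x|) with hφ
  have hfin : ∀ G : DI, σ G.set ≠ ∞ := fun G => measure_Ico_lt_top.ne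
  have key : ∀ G ∈ 𝒢, ENNReal.ofReal l * σ G.set ≤ 2 * ∫⁻ x in G.set, φ x ∂σ := by
    intro G hG
    have h := hav G hG
    unfold avg at h
    have hpos : 0 < (σ G.set).toReal := by
      rcases (ENNReal.toReal_nonneg (a := σ G.set)).eq_or_lt with h0 | h0
      · rw [← h0, div_zero] at h; linarith
      · exact h0
    rw [lt_div_iff₀ hpos] at h
    have hint : Integrable (fun x => |g x|) (σ.restrict G.set) := by
      by_contra hni
      rw [integral_undef hni] at h
      nlinarith [mul_pos hl hpos]
    have h1 : ENNReal.ofReal l * σ G.set ≤ ∫⁻ x in G.set, ENNReal.ofReal |g x| ∂σ := by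
      rw [← ofReal_integral_eq_lintegral_ofReal hint (Filter.Eventually.of_forall fun x => abs_nonneg _)]
      calc _ = ENNReal.ofReal (l * (σ G.set).toReal) := by
            rw [ENNReal.ofReal_mul hl.le, ENNReal.ofReal_toReal (hfin G)]
        _ ≤ _ := ENNReal.ofReal_le_ofReal h.le
    have h2 : ∫⁻ x in G.set, ENNReal.ofReal |g x| ∂σ ≤
        (∫⁻ x in G.set, φ x ∂σ) + ENNReal.ofReal (l/2) * σ G.set := by
      rw [← setLIntegral_const, ← lintegral_add_right _ measurable_const]
      apply lintegral_mono
      intro x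
      by_cases hx : l / 2 < |g x|
      · simp [hφ, hx]
      · simp only [hφ]
        refine le_add_left (ENNReal.ofReal_le_ofReal (not_lt.1 hx))
    have h3 : ENNReal.ofReal l = 2 * ENNReal.ofReal (l/2) := by
      rw [← ENNReal.ofReal_ofNat, ← ENNReal.ofReal_mul (by norm_num)]; congr 1; ring
    have h4 := h1.trans h2
    rw [h3, two_mul, add_mul] at h4
    have h5 := (ENNReal.add_le_add_iff_right
      (ENNReal.mul_ne_top ENNReal.ofReal_ne_top (hfin G))).1 h4
    rw [h3, mul_assoc]
    gcongr
  have hcov : (⋃ G ∈ 𝒢, G.set) ⊆ ⋃ G : maxl 𝒢, (G : DI).set := by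
    intro x hx
    simp only [mem_iUnion] at hx
    obtain ⟨F, hF, hx⟩ := hx
    obtain ⟨G, hG, hFG⟩ := exists_maxl hT hF
    exact mem_iUnion.2 ⟨⟨G, hG⟩, hFG hx⟩
  calc ENNReal.ofReal l * σ (⋃ G ∈ 𝒢, G.set)
      ≤ ENNReal.ofReal l * ∑' G : maxl 𝒢, σ (G : DI).set := by
        gcongr
        exact (measure_mono hcov).trans (measure_iUnion_le _)
    _ = ∑' G : maxl 𝒢, ENNReal.ofReal l * σ (G : DI).set := ENNReal.tsum_mul_left.symm
    _ ≤ ∑' G : maxl 𝒢, 2 * ∫⁻ x in (G : DI).set, φ x ∂σ :=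
        ENNReal.tsum_le_tsum fun G => key _ G.2.1
    _ = 2 * ∑' G : maxl 𝒢, ∫⁻ x in (G : DI).set, φ x ∂σ := ENNReal.tsum_mul_left
    _ = 2 * ∫⁻ x in ⋃ G : maxl 𝒢, (G : DI).set, φ x ∂σ := by
        rw [lintegral_iUnion (fun G => meas_set _)]
        intro G H hne
        exact maxl_disjoint G.2 H.2 (fun h => hne (Subtype.ext h))
    _ ≤ _ := by
        gcongr
        exact Measure.restrict_le_self

/-- the part of `F` outside its children -/
def EF (ℱ : Set DI) (F : DI) : Set ℝ := F.set \ ⋃ G : fChildren ℱ F, (G : DI).set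

lemma meas_EF (ℱ : Set DI) (F : DI) : MeasurableSet (EF ℱ F) :=
  (meas_set F).diff (MeasurableSet.iUnion fun G => meas_set _)

lemma EF_disj_aux {ℱ : Set DI} {F G : DI} (hG : G ∈ ℱ) (hk : G.k ≤ F.k) (hne : F ≠ G) {x : ℝ}
    (hx : x ∈ EF ℱ F) (hxG : x ∈ G.set) : False := by
  have hsub := subset_of_mem hk hxG hx.1
  have hss : G.set ⊂ F.set := hsub.ssubset_of_ne (fun h => hne (set_inj h).symm)
  obtain ⟨H, hH, hGH⟩ := exists_maxl (𝒢 := {H | H ∈ ℱ ∧ H.set ⊂ F.set}) (T := F)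
    (fun H hH => hH.2.subset) (F := G) ⟨hG, hss⟩
  exact hx.2 (mem_iUnion.2 ⟨⟨H, hH.1.1, hH.1.2, fun K hK hK' hs => hH.2 K ⟨hK, hK'⟩ hs⟩, hGH hxG⟩)

lemma EF_disj {ℱ : Set DI} {F G : DI} (hF : F ∈ ℱ) (hG : G ∈ ℱ) (hne : F ≠ G) :
    Disjoint (EF ℱ F) (EF ℱ G) := by
  rw [Set.disjoint_left]
  intro x hx hx'
  rcases le_total G.k F.k with h | h
  · exact EF_disj_aux hG h hne hx hx'.1
  · exact EF_disj_aux hF h hne.symm hx' hx.1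

lemma EF_meas {σ : Measure ℝ} [IsLocallyFiniteMeasure σ] {ℱ : Set DI} {F : DI}
    (h : ∑' G : fChildren ℱ F, σ (G : DI).set ≤ σ (DI.set F) / 2) :
    σ F.set ≤ 2 * σ (EF ℱ F) := by
  have hfin : σ F.set ≠ ∞ := measure_Ico_lt_top.ne
  have h1 : σ F.set ≤ σ (EF ℱ F) + σ (⋃ G : fChildren ℱ F, (G : DI).set) := by
    refine (measure_mono ?_).trans (measure_union_le _ _)
    intro x hx
    by_cases h : x ∈ ⋃ G : fChildren ℱ F, (G : DI).set
    · exact Or.inr h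
    · exact Or.inl ⟨hx, h⟩
  have h2 := h1.trans (add_le_add_right ((measure_iUnion_le _).trans h) _)
  nth_rewrite 1 [← ENNReal.add_halves (σ F.set)] at h2
  have h3 := (ENNReal.add_le_add_iff_right (ENNReal.div_ne_top hfin (by norm_num))).1 h2
  calc σ F.set = 2 * (σ F.set / 2) := (ENNReal.mul_div_cancel (by norm_num) (by norm_num)).symm
    _ ≤ _ := by gcongr

lemma level_sum (σ : Measure ℝ) [IsLocallyFiniteMeasure σ] {T : DI} {ℱ : Set DI}
    (hT : ∀ G ∈ ℱ, G.set ⊆ T.set)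
    (hC : ∀ F ∈ ℱ, ∑' G : fChildren ℱ F, σ (G : DI).set ≤ σ (DI.set F) / 2)
    {g : ℝ → ℝ} (hg : Measurable g) {l : ℝ} (hl : 0 < l) :
    ENNReal.ofReal l * ∑' F : ℱ, (if l < alphaF σ ℱ g F then σ (F : DI).set else 0) ≤
      4 * ∫⁻ x, {x | l / 2 < |g x|}.indicator (fun x => ENNReal.ofReal |g x|) x ∂σ := by
  set 𝒢 : Set DI := {G | G ∈ ℱ ∧ l < avg σ G.set (fun x => |g x|)} with h𝒢
  have hw := weak_type σ (T := T) (𝒢 := 𝒢) (fun G hG => hT G hG.1) hg hl (fun G hG => hG.2)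
  have h1 : ∑' F : ℱ, (if l < alphaF σ ℱ g F then σ (F : DI).set else 0) ≤
      2 * σ (⋃ G ∈ 𝒢, G.set) := by
    calc _ ≤ ∑' F : ℱ, 2 * σ (if l < alphaF σ ℱ g F then EF ℱ F else ∅) := by
          refine ENNReal.tsum_le_tsum fun F => ?_
          split_ifs
          · exact EF_meas (hC F F.2)
          · simp
      _ = 2 * ∑' F : ℱ, σ (if l < alphaF σ ℱ g F then EF ℱ F else ∅) := ENNReal.tsum_mul_left
      _ = 2 * σ (⋃ F : ℱ, (if l < alphaF σ ℱ g F then EF ℱ F else ∅)) := by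
          rw [measure_iUnion]
          · intro F G hne
            have := EF_disj F.2 G.2 (fun h => hne (Subtype.ext h))
            simp only [Function.onFun]
            split_ifs <;> simp [this]
          · intro F
            split_ifs
            · exact meas_EF _ _
            · exact MeasurableSet.empty
      _ ≤ _ := by
          gcongr
          refine iUnion_subset fun F => ?_
          split_ifs with h
          · haveI : Nonempty {G : DI // G ∈ ℱ ∧ (F : DI).set ⊆ G.set} := ⟨⟨F, F.2, subset_rfl⟩⟩
            obtain ⟨G, hG⟩ := exists_lt_of_lt_ciSup h
            intro x hx
            simp only [mem_iUnion]
            exact ⟨G, ⟨G.2.1, hG⟩, G.2.2 hx.1⟩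
          · simp
  calc _ ≤ ENNReal.ofReal l * (2 * σ (⋃ G ∈ 𝒢, G.set)) := by gcongr
    _ = 2 * (ENNReal.ofReal l * σ (⋃ G ∈ 𝒢, G.set)) := by ring
    _ ≤ 2 * (2 * _) := by gcongr
    _ = _ := by rw [← mul_assoc]; norm_num

lemma layer (a : ℝ) : ENNReal.ofReal a ^ 2 =
    ∫⁻ l in Ioi (0:ℝ), ENNReal.ofReal (2 * l) * (if l < a then 1 else 0) := by
  have e : ∀ l : ℝ, ENNReal.ofReal (2 * l) * (if l < a then 1 else 0)
      = (Iio a).indicator (fun l => ENNReal.ofReal (2 * l)) l := by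
    intro l; simp [indicator]
  simp_rw [e]
  rw [lintegral_indicator measurableSet_Iio, Measure.restrict_restrict measurableSet_Iio]
  rcases le_or_gt a 0 with ha | ha
  · have : Iio a ∩ Ioi 0 = ∅ := by
      ext x; simp; intro h; linarith
    rw [this, ENNReal.ofReal_of_nonpos ha]; simp
  · have : Iio a ∩ Ioi 0 = Ioo 0 a := by ext x; simp [and_comm]
    rw [this, ← ofReal_integral_eq_lintegral_ofReal]
    · rw [← integral_Ioc_eq_integral_Ioo, ← intervalIntegral.integral_of_le ha.le,
        intervalIntegral.integral_const_mul, integral_id, ← ENNReal.ofReal_pow ha.le]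
      congr 1; ring
    · exact (continuous_const.mul continuous_id).integrableOn_Icc.mono_set Ioo_subset_Icc_self
    · refine (ae_restrict_mem measurableSet_Ioo).mono fun x hx => ?_
      have := hx.1
      simp only [Pi.zero_apply]; positivity

lemma main_meas (σ : Measure ℝ) [IsLocallyFiniteMeasure σ] {T : DI} {ℱ : Set DI}
    (hT : ∀ G ∈ ℱ, G.set ⊆ T.set)
    (hC : ∀ F ∈ ℱ, ∑' G : fChildren ℱ F, σ (G : DI).set ≤ σ (DI.set F) / 2)
    {g : ℝ → ℝ} (hg : Measurable g) :
    ∑' F : ℱ, σ (F : DI).set * ENNReal.ofReal (alphaF σ ℱ g (F : DI)) ^ 2 ≤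
          ENNReal.ofReal 16 * ∫⁻ x, ENNReal.ofReal (g x ^ 2) ∂σ := by
  have hm : ∀ a : ℝ, Measurable fun l : ℝ => ENNReal.ofReal (2 * l) * (if l < a then (1:ℝ≥0∞) else 0) :=
    fun a => (by fun_prop : Measurable fun l : ℝ => ENNReal.ofReal (2 * l)).mul
      (Measurable.ite measurableSet_Iio measurable_const measurable_const)
  calc _ = ∑' F : ℱ, ∫⁻ l in Ioi (0:ℝ), σ (F : DI).set *
            (ENNReal.ofReal (2 * l) * (if l < alphaF σ ℱ g F then 1 else 0)) := by
        refine tsum_congr fun F => ?_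
        rw [layer, lintegral_const_mul _ (hm _)]
    _ = ∫⁻ l in Ioi (0:ℝ), ∑' F : ℱ, σ (F : DI).set *
            (ENNReal.ofReal (2 * l) * (if l < alphaF σ ℱ g F then 1 else 0)) := by
        rw [lintegral_tsum]
        exact fun F => ((hm _).const_mul _).aemeasurable
    _ ≤ ∫⁻ l in Ioi (0:ℝ), 8 * ∫⁻ x, {x | l / 2 < |g x|}.indicator
          (fun x => ENNReal.ofReal |g x|) x ∂σ := by
        refine setLIntegral_mono' measurableSet_Ioi fun l hl => ?_
        have h := level_sum σ hT hC hg hl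
        calc _ = 2 * (ENNReal.ofReal l *
              ∑' F : ℱ, (if l < alphaF σ ℱ g F then σ (F : DI).set else 0)) := by
              rw [← ENNReal.tsum_mul_left, ← ENNReal.tsum_mul_left]
              refine tsum_congr fun F => ?_
              rw [ENNReal.ofReal_mul (by norm_num), ENNReal.ofReal_ofNat]
              split_ifs
              · ring
              · simp
          _ ≤ 2 * (4 * _) := by gcongr
          _ = _ := by rw [← mul_assoc]; norm_num
    _ = 8 * ∫⁻ l in Ioi (0:ℝ), ∫⁻ x, {x | l / 2 < |g x|}.indicator
          (fun x => ENNReal.ofReal |g x|) x ∂σ := lintegral_const_mul' _ _ (by norm_num)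
    _ = 8 * ∫⁻ x, (∫⁻ l in Ioi (0:ℝ), {x | l / 2 < |g x|}.indicator
          (fun x => ENNReal.ofReal |g x|) x) ∂σ := by
        rw [lintegral_lintegral_swap]
        refine Measurable.aemeasurable ?_
        have : (Function.uncurry fun (l x : ℝ) => {x | l / 2 < |g x|}.indicator
          (fun x => ENNReal.ofReal |g x|) x) =
            {p : ℝ × ℝ | p.1 / 2 < |g p.2|}.indicator (fun p => ENNReal.ofReal |g p.2|) := by
          ext ⟨l, x⟩; simp [indicator]
        rw [this]
        refine Measurable.indicator (by fun_prop) (measurableSet_lt (by fun_prop) (by fun_prop))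
    _ = 8 * ∫⁻ x, 2 * ENNReal.ofReal (g x ^ 2) ∂σ := by
        congr 1
        refine lintegral_congr fun x => ?_
        have e : ∀ l : ℝ, {x | l / 2 < |g x|}.indicator (fun x => ENNReal.ofReal |g x|) x =
            (Iio (2 * |g x|)).indicator (fun _ => ENNReal.ofReal |g x|) l := by
          intro l
          have : l / 2 < |g x| ↔ l < 2 * |g x| := by constructor <;> intro h <;> linarith
          simp [indicator, this]
        simp_rw [e]
        rw [lintegral_indicator measurableSet_Iio, Measure.restrict_restrict measurableSet_Iio,
          setLIntegral_const]
        have : Iio (2 * |g x|) ∩ Ioi 0 = Ioo 0 (2 * |g x|) := by ext y; simp [and_comm]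
        rw [this, Real.volume_Ioo, ← ENNReal.ofReal_mul (abs_nonneg _), ← ENNReal.ofReal_ofNat,
          ← ENNReal.ofReal_mul (by norm_num)]
        congr 1
        rw [← sq_abs (g x)]; ring
    _ = _ := by
        rw [lintegral_const_mul' _ _ (by norm_num), ← mul_assoc, ENNReal.ofReal_ofNat]
        norm_num

/-- Quasi-orthogonality. -/
theorem statement7 :
    ∃ C : ℝ, 0 < C ∧
      ∀ (σ : Measure ℝ), IsLocallyFiniteMeasure σ →
      ∀ (T : DI) (ℱ : Set DI), T ∈ ℱ → (∀ F ∈ ℱ, DI.set F ⊆ T.set) →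
        (∀ F ∈ ℱ, ∑' G : fChildren ℱ F, σ (G : DI).set ≤ σ (DI.set F) / 2) →
      ∀ f : ℝ → ℝ, MeasureTheory.MemLp f 2 σ →
        ∑' F : ℱ, σ (F : DI).set * ENNReal.ofReal (alphaF σ ℱ f (F : DI)) ^ 2 ≤
          ENNReal.ofReal C * ∫⁻ x, ENNReal.ofReal (f x ^ 2) ∂σ := by
  refine ⟨16, by norm_num, ?_⟩
  intro σ hσ T ℱ _ hT hC f hf
  obtain ⟨g, hg, hfg⟩ := hf.1
  have h := main_meas σ hT hC hg.measurable
  have e1 : ∀ F, alphaF σ ℱ f F = alphaF σ ℱ g F := by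
    intro F
    unfold alphaF avg
    congr 1
    ext G
    congr 1
    refine integral_congr_ae ?_
    refine (ae_restrict_of_ae hfg).mono fun x hx => ?_
    simp only [hx]
  have e2 : ∫⁻ x, ENNReal.ofReal (f x ^ 2) ∂σ = ∫⁻ x, ENNReal.ofReal (g x ^ 2) ∂σ := by
    refine lintegral_congr_ae (hfg.mono fun x hx => ?_)
    simp only [hx]
  simp only [e1, e2]
  exact h

end
end
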